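/- arXiv:1806.02647 — 2 statements merged into one kernel-verified Lean document; each statement's English description precedes it below -/
import Mathlib

section
/- Let 0 < ε_1 < … < ε_m be tolerances, let c be the cost values of the dynamic program, and let S_m, …, S_1 be an algorithm output. Then for every 1 ≤ k ≤ m and every edge (i,j) of S_k, the cost value c(k,(i,j)) equals the sum over ℓ = 1, …, k of the number of edges (x,y) of S_ℓ satisfying i ≤ x < y ≤ j. -/
open Metric

noncomputable section

/-- The Euclidean plane. -/
abbrev Pt : Type := EuclideanSpace ℝ (Fin 2)

/-- The subcurve `⟨p i, …, p j⟩`: the union of the segments between consecutive vertices. -/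
def subcurve {n : ℕ} (p : Fin n → Pt) (i j : Fin n) : Set Pt :=
  ⋃ (t : Fin n) (_ : i ≤ t ∧ t < j) (h : (t : ℕ) + 1 < n),
    segment ℝ (p t) (p ⟨(t : ℕ) + 1, h⟩)

/-- The (Hausdorff-distance) error of the shortcut `(i, j)`. -/
def err {n : ℕ} (p : Fin n → Pt) (i j : Fin n) : ℝ :=
  Metric.hausdorffDist (segment ℝ (p i) (p j)) (subcurve p i j)

/-- The edges (consecutive pairs) of a path given as a list of vertices. -/
def edges {n : ℕ} (l : List (Fin n)) : List (Fin n × Fin n) := l.zip l.tail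

/-- `l` is a path from `i` to `j` at tolerance `ε`: a strictly increasing sequence of
indices starting at `i`, ending at `j`, all of whose edges are valid shortcuts for `ε`. -/
def IsPath {n : ℕ} (p : Fin n → Pt) (ε : ℝ) (i j : Fin n) (l : List (Fin n)) : Prop :=
  l.Chain' (· < ·) ∧ l.head? = some i ∧ l.getLast? = some j ∧
    ∀ e ∈ edges l, err p e.1 e.2 ≤ ε

/-- The cost of a path: the sum of the costs of its edges. -/
def pathCost {n : ℕ} {α : Type*} [AddCommMonoid α] (c : Fin n → Fin n → α)
    (l : List (Fin n)) : α :=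
  ((edges l).map (fun e => c e.1 e.2)).sum

/-- Minimum cost (natural-valued) of a path from `i` to `j` at tolerance `ε`. -/
def minCost {n : ℕ} (p : Fin n → Pt) (ε : ℝ) (c : Fin n → Fin n → ℕ) (i j : Fin n) : ℕ :=
  sInf {s : ℕ | ∃ l, IsPath p ε i j l ∧ pathCost c l = s}

/-- Minimum cost (real-valued) of a path from `i` to `j` at tolerance `ε`. -/
def minCostR {n : ℕ} (p : Fin n → Pt) (ε : ℝ) (c : Fin n → Fin n → ℝ) (i j : Fin n) : ℝ :=
  sInf {s : ℝ | ∃ l, IsPath p ε i j l ∧ pathCost c l = s}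

/-- `l` is a minimum-cost path from `i` to `j` at tolerance `ε` w.r.t. cost `c`. -/
def IsMinPath {n : ℕ} (p : Fin n → Pt) (ε : ℝ) (c : Fin n → Fin n → ℕ) (i j : Fin n)
    (l : List (Fin n)) : Prop :=
  IsPath p ε i j l ∧ ∀ l', IsPath p ε i j l' → pathCost c l ≤ pathCost c l'

/-- `L'` is obtained from `L` by replacing each edge `(i, j)` of `L` by a minimum-cost
path from `i` to `j` at tolerance `ε`, and concatenating. -/
def Refines {n : ℕ} (p : Fin n → Pt) (ε : ℝ) (c : Fin n → Fin n → ℕ)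
    (L L' : List (Fin n)) : Prop :=
  ∃ f : Fin n × Fin n → List (Fin n),
    (∀ e ∈ edges L, IsMinPath p ε c e.1 e.2 (f e)) ∧
    L' = L.take 1 ++ ((edges L).map (fun e => (f e).tail)).flatten

/-- `S 1, …, S m` is a progressive simplification for the tolerances `ε 1 < … < ε m`:
each `S k` is an `ε k`-simplification (a path from `v0` to `v1`), and every vertex of
`S (k+1)` is a vertex of `S k`. -/
def ProgSimp {n : ℕ} (p : Fin n → Pt) (m : ℕ) (ε : ℕ → ℝ) (v0 v1 : Fin n)
    (S : ℕ → List (Fin n)) : Prop :=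
  (∀ k, 1 ≤ k → k ≤ m → IsPath p (ε k) v0 v1 (S k)) ∧
  (∀ k, 1 ≤ k → k < m → ∀ v ∈ S (k + 1), v ∈ S k)

/-!
Fix `ℓ` and let `N ℓ a b` be the number of edges of `S ℓ` lying between `a` and `b`. No edge of
`S ℓ` jumps over a vertex of `S ℓ`, so `N ℓ` is additive at the vertices of `S ℓ`, and its sum
along any path through such vertices telescopes to its value at the two endpoints. An edge
`(i, j)` of `S (k + 1)` costs one plus the `c k`-cost of the path replacing it in `S k`; since the
vertices of `S k` belong to every `S ℓ` with `ℓ ≤ k`, by induction that path costs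
`∑ ℓ ≤ k, N ℓ i j`. The extra one is `N (k + 1) i j`: the edge `(i, j)` itself.
-/

section ConsecutivePairs

variable {α : Type*} {l l' : List α} {e : α × α} {i j k : α}

theorem mem_consecutivePairs_iff_getElem :
    e ∈ l.consecutivePairs ↔ ∃ (t : ℕ) (h : t + 1 < l.length), (l[t], l[t + 1]) = e := by
  simp only [List.mem_iff_getElem, List.getElem_zip, List.getElem_tail, List.length_zip,
    List.length_tail]
  grind

theorem consecutivePairs_cons_cons (a b : α) (l : List α) :
    (a :: b :: l).consecutivePairs = (a, b) :: (b :: l).consecutivePairs :=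
  rfl

theorem fst_mem_of_mem_consecutivePairs (he : e ∈ l.consecutivePairs) : e.1 ∈ l :=
  (List.of_mem_zip (a := e.1) (b := e.2) he).1

theorem snd_mem_of_mem_consecutivePairs (he : e ∈ l.consecutivePairs) : e.2 ∈ l :=
  List.mem_of_mem_tail (List.of_mem_zip (a := e.1) (b := e.2) he).2

theorem nodup_consecutivePairs (hl : l.Nodup) : l.consecutivePairs.Nodup := by
  refine List.Nodup.of_map Prod.snd ?_
  rw [List.map_snd_zip (by simp)]
  exact hl.tail

theorem isChain_iff_forall_mem_consecutivePairs {R : α → α → Prop} :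
    l.IsChain R ↔ ∀ e ∈ l.consecutivePairs, R e.1 e.2 := by
  induction l using List.twoStepInduction with
  | nil => simp
  | singleton a => simp [List.consecutivePairs]
  | cons_cons a b l _ ih =>
    simp only [List.isChain_cons_cons, ih b, consecutivePairs_cons_cons, List.forall_mem_cons]

theorem sortedLT_iff_forall_mem_consecutivePairs [Preorder α] :
    l.SortedLT ↔ ∀ e ∈ l.consecutivePairs, e.1 < e.2 :=
  List.sortedLT_iff_isChain.trans isChain_iff_forall_mem_consecutivePairs

theorem consecutivePairs_append_tail (h : l.getLast? = l'.head?) :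
    (l ++ l'.tail).consecutivePairs = l.consecutivePairs ++ l'.consecutivePairs := by
  induction l using List.twoStepInduction with
  | nil => cases l' <;> simp_all
  | singleton a => cases l' <;> simp_all
  | cons_cons a b l _ ih =>
    simpa [consecutivePairs_cons_cons] using ih b (by simpa using h)

/-- `Joins i j l` says that the list `l` begins at `i` and ends at `j`: the part of being a path
from `i` to `j` that does not restrict the steps. -/
structure Joins (i j : α) (l : List α) : Prop where
  head?_eq : l.head? = some i
  getLast?_eq : l.getLast? = some j

namespace Joins

theorem append_tail (hl : Joins i j l) (hl' : Joins j k l') : Joins i k (l ++ l'.tail) := by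
  obtain ⟨t, rfl⟩ := List.head?_eq_some_iff.mp hl'.head?_eq
  refine ⟨by simp [hl.head?_eq], ?_⟩
  simp [← hl'.getLast?_eq, hl.getLast?_eq, List.getLast?_cons, Option.or_some]

theorem le_of_mem [Preorder α] (hl : Joins i j l) (hsort : l.SortedLT) (hk : k ∈ l) : k ≤ j := by
  obtain ⟨_, hlast⟩ := List.mem_getLast?_eq_getLast hl.getLast?_eq
  exact hlast ▸ hsort.sortedLE.pairwise.rel_getLast hk

theorem sum_consecutivePairs_eq {M : Type*} [AddMonoid M] {φ : α → α → M} (hl : Joins i j l)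
    (hself : φ j j = 0) (hadd : ∀ e ∈ l.consecutivePairs, φ e.1 e.2 + φ e.2 j = φ e.1 j) :
    (l.consecutivePairs.map fun e => φ e.1 e.2).sum = φ i j := by
  obtain ⟨hi, hj⟩ := hl
  induction l using List.twoStepInduction generalizing i with
  | nil => simp at hi
  | singleton a => simp_all [List.consecutivePairs]
  | cons_cons a b l _ ih =>
    obtain rfl : a = i := by simpa using hi
    have htail := ih b (fun e he => hadd e (List.mem_cons_of_mem _ he)) rfl (by simpa using hj)
    have hhead : φ a b + φ b j = φ a j := hadd (a, b) List.mem_cons_self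
    simp [consecutivePairs_cons_cons, htail, hhead]

end Joins

end ConsecutivePairs

section Subdivide

variable {α : Type*} {f : α × α → List α} {L : List α} {i j : α}

/-- The list obtained from `L` by replacing each consecutive pair `e` by `f e`, in the form used
by `Refines`: consecutive pieces share a vertex, so only the tails are concatenated. -/
def subdivide (f : α × α → List α) (L : List α) : List α :=
  L.take 1 ++ (L.consecutivePairs.map fun e => (f e).tail).flatten

theorem subdivide_cons_cons {a b : α} (hab : (f (a, b)).head? = some a) (t : List α) :
    subdivide f (a :: b :: t) = f (a, b) ++ (subdivide f (b :: t)).tail := by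
  obtain ⟨u, hu⟩ := List.head?_eq_some_iff.mp hab
  simp [subdivide, consecutivePairs_cons_cons, hu]

theorem head?_subdivide : (subdivide f L).head? = L.head? := by
  cases L <;> simp [subdivide]

theorem joins_subdivide (hL : Joins i j L)
    (hf : ∀ e ∈ L.consecutivePairs, Joins e.1 e.2 (f e)) : Joins i j (subdivide f L) := by
  obtain ⟨hi, hj⟩ := hL
  induction L using List.twoStepInduction generalizing i with
  | nil => simp at hi
  | singleton a => exact ⟨hi, hj⟩
  | cons_cons a b t _ ih =>
    obtain rfl : a = i := by simpa using hi
    obtain ⟨hab, ht⟩ := List.forall_mem_cons.mp hf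
    rw [subdivide_cons_cons hab.head?_eq]
    exact hab.append_tail (ih b ht rfl (by simpa using hj))

theorem consecutivePairs_subdivide (hf : ∀ e ∈ L.consecutivePairs, Joins e.1 e.2 (f e)) :
    (subdivide f L).consecutivePairs =
      L.consecutivePairs.flatMap fun e => (f e).consecutivePairs := by
  induction L using List.twoStepInduction with
  | nil => rfl
  | singleton a => rfl
  | cons_cons a b t _ ih =>
    obtain ⟨hab, ht⟩ := List.forall_mem_cons.mp hf
    have hglue : (f (a, b)).getLast? = (subdivide f (b :: t)).head? := by
      rw [hab.getLast?_eq, head?_subdivide, List.head?_cons]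
    rw [subdivide_cons_cons hab.head?_eq, consecutivePairs_append_tail hglue, ih b ht]
    rfl

theorem subset_subdivide (hf : ∀ e ∈ L.consecutivePairs, Joins e.1 e.2 (f e)) :
    L ⊆ subdivide f L := by
  induction L using List.twoStepInduction with
  | nil => exact List.nil_subset _
  | singleton a => exact List.Subset.refl _
  | cons_cons a b t _ ih =>
    obtain ⟨hab, ht⟩ := List.forall_mem_cons.mp hf
    have ha : a ∈ f (a, b) := List.mem_of_mem_head? hab.head?_eq
    have hb : b ∈ f (a, b) := List.mem_of_getLast? hab.getLast?_eq
    have htail : b :: t ⊆ b :: (subdivide f (b :: t)).tail := ih b ht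
    rw [subdivide_cons_cons hab.head?_eq]
    grind

end Subdivide

section CountWithin

variable {α : Type*} [Preorder α] {l : List α} {a b d : α} {e : α × α}

theorem le_or_le_of_mem_consecutivePairs (hl : l.SortedLT) (he : e ∈ l.consecutivePairs)
    (hb : b ∈ l) : e.2 ≤ b ∨ b ≤ e.1 := by
  obtain ⟨t, ht, rfl⟩ := mem_consecutivePairs_iff_getElem.mp he
  obtain ⟨s, hs, rfl⟩ := List.mem_iff_getElem.mp hb
  exact (Nat.lt_or_ge t s).imp (hl.sortedLE.getElem_le_getElem_of_le ·)
    (hl.sortedLE.getElem_le_getElem_of_le ·)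

variable [DecidableLE α] [DecidableLT α]

/-- The number of consecutive pairs `(x, y)` of `l` with `a ≤ x < y ≤ b`: the covering count of
the theorem, as a function of the interval. -/
def countWithin (l : List α) (a b : α) : ℕ :=
  l.consecutivePairs.countP fun e => decide (a ≤ e.1 ∧ e.1 < e.2 ∧ e.2 ≤ b)

theorem countWithin_self (l : List α) (a : α) : countWithin l a a = 0 := by
  rw [countWithin, List.countP_eq_zero]
  grind

theorem countWithin_add (hl : l.SortedLT) (hb : b ∈ l) (hab : a ≤ b) (hbd : b ≤ d) :
    countWithin l a b + countWithin l b d = countWithin l a d := by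
  have hgap : ∀ e ∈ l.consecutivePairs, e.2 ≤ b ∨ b ≤ e.1 :=
    fun e he => le_or_le_of_mem_consecutivePairs hl he hb
  symm
  rw [countWithin, countWithin, countWithin,
    List.countP_eq_countP_filter_add l.consecutivePairs _ fun e => decide (e.2 ≤ b),
    List.countP_filter, List.countP_filter]
  congr 1 <;> refine List.countP_congr fun e he => ?_ <;> grind

theorem sum_consecutivePairs_sum_countWithin {ι : Type*} {s : Finset ι} {S : ι → List α}
    (hS : ∀ ℓ ∈ s, (S ℓ).SortedLT) (hl : Joins a b l) (hsort : l.SortedLT)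
    (hmem : ∀ ℓ ∈ s, ∀ e ∈ l.consecutivePairs, e.2 ∈ S ℓ) :
    (l.consecutivePairs.map fun e => ∑ ℓ ∈ s, countWithin (S ℓ) e.1 e.2).sum =
      ∑ ℓ ∈ s, countWithin (S ℓ) a b := by
  refine hl.sum_consecutivePairs_eq (φ := fun x y => ∑ ℓ ∈ s, countWithin (S ℓ) x y) ?_ ?_
  · simp only [countWithin_self, Finset.sum_const_zero]
  · intro e he
    have hle : e.1 ≤ e.2 := (sortedLT_iff_forall_mem_consecutivePairs.mp hsort e he).le
    have hlast : e.2 ≤ b := hl.le_of_mem hsort (snd_mem_of_mem_consecutivePairs he)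
    rw [← Finset.sum_add_distrib]
    exact Finset.sum_congr rfl fun ℓ hℓ => countWithin_add (hS ℓ hℓ) (hmem ℓ hℓ e he) hle hlast

end CountWithin

section Recursion

variable {α : Type*} [PartialOrder α] {l : List α} {e e' : α × α}

theorem eq_of_mem_consecutivePairs_of_le (hl : l.SortedLT) (he : e ∈ l.consecutivePairs)
    (he' : e' ∈ l.consecutivePairs) (hfst : e.1 ≤ e'.1) (hsnd : e'.2 ≤ e.2) : e' = e := by
  have hlt : e'.1 < e'.2 := sortedLT_iff_forall_mem_consecutivePairs.mp hl e' he'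
  have h₁ := le_or_le_of_mem_consecutivePairs hl he (fst_mem_of_mem_consecutivePairs he')
  have h₂ := le_or_le_of_mem_consecutivePairs hl he (snd_mem_of_mem_consecutivePairs he')
  grind

variable [DecidableLE α] [DecidableLT α]

theorem countWithin_of_mem_consecutivePairs (hl : l.SortedLT) (he : e ∈ l.consecutivePairs) :
    countWithin l e.1 e.2 = 1 := by
  classical
  rw [← List.count_eq_one_of_mem (nodup_consecutivePairs hl.nodup) he]
  refine List.countP_congr fun e' he' => ?_
  have hlt : e'.1 < e'.2 := sortedLT_iff_forall_mem_consecutivePairs.mp hl e' he'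
  grind [eq_of_mem_consecutivePairs_of_le]

theorem eq_sum_countWithin_of_recursion {m : ℕ} {S : ℕ → List α} {c : ℕ → α → α → ℕ}
    (hS : ∀ k, 1 ≤ k → k ≤ m → (S k).SortedLT)
    (hsub : ∀ k, 1 ≤ k → k < m → S (k + 1) ⊆ S k)
    (hc_one : ∀ e ∈ (S 1).consecutivePairs, c 1 e.1 e.2 = 1)
    (hc_succ : ∀ k, 1 ≤ k → k < m → ∀ e ∈ (S (k + 1)).consecutivePairs, ∃ l, Joins e.1 e.2 l ∧
      l.consecutivePairs ⊆ (S k).consecutivePairs ∧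
      c (k + 1) e.1 e.2 = 1 + (l.consecutivePairs.map fun e' => c k e'.1 e'.2).sum)
    {k : ℕ} (h1k : 1 ≤ k) (hkm : k ≤ m) (he : e ∈ (S k).consecutivePairs) :
    c k e.1 e.2 = ∑ ℓ ∈ Finset.Icc 1 k, countWithin (S ℓ) e.1 e.2 := by
  have hanti : ∀ ℓ k, 1 ≤ ℓ → ℓ ≤ k → k ≤ m → S k ⊆ S ℓ := fun ℓ k h1ℓ hℓk hkm =>
    Nat.decreasingInduction' (P := fun ℓ => S k ⊆ S ℓ)
      (fun t htk hℓt ht => List.Subset.trans ht (hsub t (h1ℓ.trans hℓt) (htk.trans_le hkm)))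
      hℓk (List.Subset.refl _)
  induction k, h1k using Nat.le_induction generalizing e with
  | base => simp [hc_one e he, countWithin_of_mem_consecutivePairs (hS 1 le_rfl hkm) he]
  | succ k h1k ih =>
    have hkm' : k ≤ m := Nat.le_of_succ_le hkm
    obtain ⟨l, hl, hlS, hcl⟩ := hc_succ k h1k hkm e he
    have hsort : l.SortedLT := sortedLT_iff_forall_mem_consecutivePairs.mpr fun e' he' =>
      sortedLT_iff_forall_mem_consecutivePairs.mp (hS k h1k hkm') e' (hlS he')
    have hsum := sum_consecutivePairs_sum_countWithin (s := Finset.Icc 1 k) (S := S)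
      (fun ℓ hℓ => hS ℓ (Finset.mem_Icc.mp hℓ).1 ((Finset.mem_Icc.mp hℓ).2.trans hkm')) hl hsort
      (fun ℓ hℓ e' he' => hanti ℓ k (Finset.mem_Icc.mp hℓ).1 (Finset.mem_Icc.mp hℓ).2 hkm'
        (snd_mem_of_mem_consecutivePairs (hlS he')))
    rw [hcl, List.map_congr_left fun e' he' => ih hkm' (hlS he'), hsum,
      Finset.sum_Icc_succ_top (by lia), add_comm,
      countWithin_of_mem_consecutivePairs (hS (k + 1) (by lia) hkm) he]

end Recursion

section Paths

variable {n : ℕ} {p : Fin n → Pt} {ε ε' : ℝ} {c : Fin n → Fin n → ℕ} {i j : Fin n}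
  {l L L' : List (Fin n)} {e : Fin n × Fin n}

theorem IsPath.sortedLT (hl : IsPath p ε i j l) : l.SortedLT :=
  List.IsChain.sortedLT hl.1

theorem IsPath.joins (hl : IsPath p ε i j l) : Joins i j l :=
  ⟨hl.2.1, hl.2.2.1⟩

theorem IsPath.lt_of_mem_edges (hl : IsPath p ε i j l) (he : e ∈ edges l) : e.1 < e.2 :=
  sortedLT_iff_forall_mem_consecutivePairs.mp hl.sortedLT e he

theorem IsPath.err_le_of_mem_edges (hl : IsPath p ε i j l) (he : e ∈ edges l) :
    err p e.1 e.2 ≤ ε :=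
  hl.2.2.2 e he

theorem IsMinPath.minCost_eq (hl : IsMinPath p ε c i j l) : minCost p ε c i j = pathCost c l := by
  refine IsLeast.csInf_eq ⟨⟨l, hl.1, rfl⟩, ?_⟩
  rintro _ ⟨l', hl', rfl⟩
  exact hl.2 l' hl'

theorem Refines.exists_isMinPath (h : Refines p ε c L L') (he : e ∈ edges L) :
    ∃ l, IsMinPath p ε c e.1 e.2 l ∧ edges l ⊆ edges L' := by
  obtain ⟨f, hf, rfl⟩ := h
  refine ⟨f e, hf e he, fun e' he' => ?_⟩
  change e' ∈ (subdivide f L).consecutivePairs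
  rw [consecutivePairs_subdivide fun e he => (hf e he).1.joins]
  exact List.mem_flatMap.mpr ⟨e, he, he'⟩

theorem Refines.subset (h : Refines p ε c L L') : L ⊆ L' := by
  obtain ⟨f, hf, rfl⟩ := h
  exact subset_subdivide fun e he => (hf e he).1.joins

theorem Refines.isPath (h : Refines p ε c L L') (hL : IsPath p ε' i j L) : IsPath p ε i j L' := by
  obtain ⟨f, hf, rfl⟩ := h
  have hjoins : ∀ e ∈ edges L, Joins e.1 e.2 (f e) := fun e he => (hf e he).1.joins
  have hedges : ∀ e ∈ edges (subdivide f L), ∃ e₀ ∈ edges L, e ∈ edges (f e₀) := fun e he =>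
    List.mem_flatMap.mp (consecutivePairs_subdivide hjoins ▸ he)
  have hendpoints := joins_subdivide hL.joins hjoins
  refine ⟨isChain_iff_forall_mem_consecutivePairs.mpr fun e he => ?_, hendpoints.head?_eq,
    hendpoints.getLast?_eq, fun e he => ?_⟩
  · obtain ⟨e₀, he₀, he⟩ := hedges e he
    exact (hf e₀ he₀).1.lt_of_mem_edges he
  · obtain ⟨e₀, he₀, he⟩ := hedges e he
    exact (hf e₀ he₀).1.err_le_of_mem_edges he

end Paths

theorem cost_counts_covering_edges_general {n m : ℕ} (p : Fin n → Pt) (ε : ℕ → ℝ)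
    (c : ℕ → Fin n → Fin n → ℕ)
    (hc1 : ∀ i j : Fin n, i < j → err p i j ≤ ε 1 → c 1 i j = 1)
    (hck : ∀ k, 2 ≤ k → k ≤ m → ∀ i j : Fin n, i < j → err p i j ≤ ε k →
      c k i j = 1 + minCost p (ε (k - 1)) (c (k - 1)) i j)
    (S : ℕ → List (Fin n)) {v₀ v₁ : Fin n} (hSm : IsPath p (ε m) v₀ v₁ (S m))
    (hSk : ∀ k, 1 ≤ k → k < m → Refines p (ε k) (c k) (S (k + 1)) (S k)) :
    ∀ k, 1 ≤ k → k ≤ m → ∀ e ∈ edges (S k),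
      c k e.1 e.2 = ∑ ℓ ∈ Finset.Icc 1 k,
        (edges (S ℓ)).countP (fun e' => decide (e.1 ≤ e'.1 ∧ e'.1 < e'.2 ∧ e'.2 ≤ e.2)) := by
  have hpath : ∀ k, 1 ≤ k → k ≤ m → IsPath p (ε k) v₀ v₁ (S k) := fun k h1k hkm =>
    Nat.decreasingInduction' (P := fun k => IsPath p (ε k) v₀ v₁ (S k))
      (fun j hjm hkj hj => (hSk j (h1k.trans hkj) hjm).isPath hj) hkm hSm
  intro k h1k hkm e he
  refine eq_sum_countWithin_of_recursion (m := m) (fun k h1k hkm => (hpath k h1k hkm).sortedLT)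
    (fun k h1k hkm => (hSk k h1k hkm).subset) (fun e he => ?_) (fun k h1k hkm e he => ?_)
    h1k hkm he
  · have hS₁ := hpath 1 le_rfl (h1k.trans hkm)
    exact hc1 _ _ (hS₁.lt_of_mem_edges he) (hS₁.err_le_of_mem_edges he)
  · obtain ⟨l, hl, hlS⟩ := (hSk k h1k hkm).exists_isMinPath he
    have hS := hpath (k + 1) (by lia) hkm
    have hcost := hck (k + 1) (by lia) hkm _ _ (hS.lt_of_mem_edges he) (hS.err_le_of_mem_edges he)
    rw [Nat.add_sub_cancel, hl.minCost_eq] at hcost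
    exact ⟨l, hl.1.joins, hlS, hcost⟩

/-- For an algorithm output `S m, …, S 1`, the cost value of every edge
`(i, j)` of `S k` equals the total number of edges `(x, y)` with `i ≤ x < y ≤ j`
over the simplifications `S 1, …, S k`. -/
theorem cost_counts_covering_edges {n m : ℕ} (hn : 2 ≤ n) (hm : 1 ≤ m) (p : Fin n → Pt)
    (ε : ℕ → ℝ) (hε1 : 0 < ε 1)
    (hεmono : ∀ k, 1 ≤ k → k < m → ε k < ε (k + 1))
    (c : ℕ → Fin n → Fin n → ℕ)
    (hc1 : ∀ i j : Fin n, i < j → err p i j ≤ ε 1 → c 1 i j = 1)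
    (hck : ∀ k, 2 ≤ k → k ≤ m → ∀ i j : Fin n, i < j → err p i j ≤ ε k →
      c k i j = 1 + minCost p (ε (k - 1)) (c (k - 1)) i j)
    (S : ℕ → List (Fin n))
    (hSm : IsMinPath p (ε m) (c m) (⟨0, by omega⟩ : Fin n) (⟨n - 1, by omega⟩ : Fin n) (S m))
    (hSk : ∀ k, 1 ≤ k → k < m → Refines p (ε k) (c k) (S (k + 1)) (S k)) :
    ∀ k, 1 ≤ k → k ≤ m → ∀ e ∈ edges (S k),
      c k e.1 e.2 = ∑ ℓ ∈ Finset.Icc 1 k,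
        (edges (S ℓ)).countP (fun e' => decide (e.1 ≤ e'.1 ∧ e'.1 < e'.2 ∧ e'.2 ≤ e.2)) :=
  cost_counts_covering_edges_general p ε c hc1 hck S hSm.1 hSk
end
end

section
/- Let 0 < ε_1 < … < ε_m be tolerances and let c be the cost values of the dynamic program. Then the minimum, over all ε_m-simplifications π, of the sum over the edges (x,y) of π of c(m,(x,y)) equals the minimum, over all progressive simplifications S_1, …, S_m for ε_1 < … < ε_m, of Σ_{k=1}^m (|S_k| − 1). Equivalently, the minimum cumulative size Σ_{k=1}^m |S_k| over progressive simplifications equals m plus the minimum c(m,·)-cost of an ε_m-simplification. -/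
open Metric

noncomputable section

/-!
An edge `(x, y)` of `S (k + 1)` is refined in `S k` by a path from `x` to `y` at tolerance `ε k`.
Cutting `S k` at the vertices of `S (k + 1)` makes these paths independent of one another, so the
cheapest refinement of `S (k + 1)` replaces each of its edges by a cheapest path. Inductively,
`c (k + 1) x y` counts the edge `(x, y)` itself together with all edges needed below it in
`S k, …, S 1`, and `pathCost (c m) L` is the least total number of edges of a progressive
simplification with `S m = L`.
-/

section Paths

variable {n : ℕ} {p : Fin n → Pt} {ε : ℝ} {i j : Fin n} {l : List (Fin n)}

-- `IsPath` is defined through a deprecated alias of `List.IsChain`, opaque to rewriting.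
theorem isPath_iff : IsPath p ε i j l ↔ l.IsChain (· < ·) ∧ l.head? = some i ∧
    l.getLast? = some j ∧ ∀ e ∈ edges l, err p e.1 e.2 ≤ ε :=
  Iff.rfl

theorem isPath_singleton {a : Fin n} : IsPath p ε i j [a] ↔ a = i ∧ a = j := by
  simp [isPath_iff, edges]

theorem isPath_cons_cons {a b : Fin n} :
    IsPath p ε i j (a :: b :: l) ↔ a = i ∧ a < b ∧ err p a b ≤ ε ∧ IsPath p ε b j (b :: l) := by
  have edges_eq : edges (a :: b :: l) = (a, b) :: edges (b :: l) := rfl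
  simp only [isPath_iff, edges_eq, List.isChain_cons_cons, List.head?_cons, List.getLast?_cons_cons,
    List.forall_mem_cons, Option.some.injEq]
  tauto

theorem IsPath.left_mem (h : IsPath p ε i j l) : i ∈ l :=
  List.mem_of_mem_head? h.2.1

theorem IsPath.exists_eq_cons (h : IsPath p ε i j l) : ∃ w, l = i :: w :=
  List.head?_eq_some_iff.1 h.2.1

theorem IsPath.exists_eq_concat (h : IsPath p ε i j l) : ∃ u, l = u ++ [j] :=
  List.getLast?_eq_some_iff.1 h.2.2.1

@[elab_as_elim]
theorem IsPath.induction_on {motive : ∀ (i : Fin n) (l : List (Fin n)), IsPath p ε i j l → Prop}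
    (h : IsPath p ε i j l)
    (singleton : motive j [j] (isPath_singleton.2 ⟨rfl, rfl⟩))
    (cons : ∀ (i b : Fin n) (l : List (Fin n)) (hib : i < b) (herr : err p i b ≤ ε)
      (h : IsPath p ε b j (b :: l)), motive b (b :: l) h →
        motive i (i :: b :: l) (isPath_cons_cons.2 ⟨rfl, hib, herr, h⟩)) :
    motive i l h := by
  induction l generalizing i with
  | nil => exact absurd h.left_mem List.not_mem_nil
  | cons a l ih =>
    cases l with
    | nil =>
      obtain ⟨rfl, rfl⟩ := isPath_singleton.1 h
      exact singleton
    | cons b l =>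
      obtain ⟨rfl, hab, herr, hl⟩ := isPath_cons_cons.1 h
      exact cons a b l hab herr hl (ih hl)

theorem isPath_append_cons {b : Fin n} {u w : List (Fin n)} :
    IsPath p ε i j (u ++ b :: w) ↔ IsPath p ε i b (u ++ [b]) ∧ IsPath p ε b j (b :: w) := by
  induction u generalizing i with
  | nil =>
    simp only [List.nil_append, isPath_singleton, and_true]
    refine ⟨fun h => ?_, fun ⟨hbi, h⟩ => hbi ▸ h⟩
    obtain rfl : b = i := by simpa using h.2.1
    exact ⟨rfl, h⟩
  | cons a u ih =>
    cases u with
    | nil => simp [isPath_cons_cons, isPath_singleton, and_assoc]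
    | cons a' u => simpa [isPath_cons_cons, and_assoc] using fun _ _ _ => ih

theorem IsPath.mem_cons_of_le {b v : Fin n} {u w : List (Fin n)} (h : IsPath p ε i j (u ++ b :: w))
    (hv : v ∈ u ++ b :: w) (hbv : b ≤ v) : v ∈ b :: w := by
  have hlt := (List.pairwise_append.1 (List.isChain_iff_pairwise.1 h.1)).2.2
  exact (List.mem_append.1 hv).resolve_left fun hu => (hlt v hu b List.mem_cons_self).not_ge hbv

theorem IsPath.left_le {v : Fin n} (h : IsPath p ε i j l) (hv : v ∈ l) : i ≤ v := by
  obtain ⟨w, rfl⟩ := h.exists_eq_cons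
  rcases List.mem_cons.1 hv with rfl | hw
  exacts [le_rfl, (List.rel_of_pairwise_cons (List.isChain_iff_pairwise.1 h.1) hw).le]

theorem subcurve_eq_segment_of_succ_eq (h : (i : ℕ) + 1 = j) :
    subcurve p i j = segment ℝ (p i) (p j) := by
  have hj : (i : ℕ) + 1 < n := h ▸ j.isLt
  obtain rfl : j = ⟨i + 1, hj⟩ := Fin.ext h.symm
  have between_iff : ∀ t : Fin n, i ≤ t ∧ t < ⟨i + 1, hj⟩ ↔ t = i := fun t => by
    rw [Fin.le_def, Fin.lt_def, Fin.ext_iff]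
    dsimp only
    omega
  simp [subcurve, between_iff, hj]

theorem err_eq_zero_of_succ_eq (h : (i : ℕ) + 1 = j) : err p i j = 0 := by
  rw [err, subcurve_eq_segment_of_succ_eq h, hausdorffDist_self_zero]

theorem exists_isPath (p : Fin n → Pt) (hε : 0 ≤ ε) (hij : i ≤ j) : ∃ l, IsPath p ε i j l := by
  induction i using WellFoundedGT.induction with
  | ind i ih =>
    rcases hij.eq_or_lt with rfl | hlt
    · exact ⟨[i], isPath_singleton.2 ⟨rfl, rfl⟩⟩
    · have hi : (i : ℕ) + 1 < n := by omega
      have hnext : i < ⟨i + 1, hi⟩ := Nat.lt_succ_self i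
      obtain ⟨l, hl⟩ := ih ⟨i + 1, hi⟩ hnext hlt
      obtain ⟨w, rfl⟩ := hl.exists_eq_cons
      exact ⟨_, isPath_cons_cons.2 ⟨rfl, hnext, (err_eq_zero_of_succ_eq rfl).trans_le hε, hl⟩⟩

end Paths

section PathCost

variable {n : ℕ} {p : Fin n → Pt} {ε δ : ℝ} {i j : Fin n} {l L : List (Fin n)}

section AddCommMonoid

variable {α : Type*} [AddCommMonoid α]

theorem pathCost_singleton (c : Fin n → Fin n → α) (a : Fin n) : pathCost c [a] = 0 := rfl

theorem pathCost_cons_cons (c : Fin n → Fin n → α) (a b : Fin n) (l : List (Fin n)) :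
    pathCost c (a :: b :: l) = c a b + pathCost c (b :: l) := by
  simp [pathCost, edges]

theorem pathCost_append_cons (c : Fin n → Fin n → α) (u w : List (Fin n)) (b : Fin n) :
    pathCost c (u ++ b :: w) = pathCost c (u ++ [b]) + pathCost c (b :: w) := by
  induction u with
  | nil => simp [pathCost_singleton]
  | cons a u ih =>
    cases u with
    | nil => simp [pathCost_cons_cons, pathCost_singleton]
    | cons a' u => simpa [pathCost_cons_cons, add_assoc] using congrArg (c a a' + ·) ih

theorem pathCost_add (c d : Fin n → Fin n → α) (l : List (Fin n)) :
    pathCost (c + d) l = pathCost c l + pathCost d l :=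
  List.sum_map_add

theorem IsPath.pathCost_congr {c d : Fin n → Fin n → α} (h : IsPath p ε i j l)
    (hcd : ∀ a b, a < b → err p a b ≤ ε → c a b = d a b) : pathCost c l = pathCost d l := by
  induction h using IsPath.induction_on with
  | singleton => rfl
  | cons i b l hib herr _ ih => rw [pathCost_cons_cons, pathCost_cons_cons, hcd i b hib herr, ih]

end AddCommMonoid

theorem pathCost_one (l : List (Fin n)) : pathCost (1 : Fin n → Fin n → ℕ) l = l.length - 1 := by
  simp [pathCost, edges]

theorem IsPath.minCost_le (h : IsPath p ε i j l) (c : Fin n → Fin n → ℕ) :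
    minCost p ε c i j ≤ pathCost c l :=
  Nat.sInf_le ⟨l, h, rfl⟩

theorem exists_pathCost_eq_minCost (p : Fin n → Pt) (hε : 0 ≤ ε) (c : Fin n → Fin n → ℕ)
    (hij : i ≤ j) : ∃ l, IsPath p ε i j l ∧ pathCost c l = minCost p ε c i j := by
  obtain ⟨l, hl⟩ := exists_isPath p hε hij
  exact Nat.sInf_mem (s := {s | ∃ l, IsPath p ε i j l ∧ pathCost c l = s}) ⟨_, l, hl, rfl⟩

theorem IsPath.pathCost_minCost_le (hL : IsPath p δ i j L) (hl : IsPath p ε i j l) (hsub : L ⊆ l)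
    (c : Fin n → Fin n → ℕ) : pathCost (minCost p ε c) L ≤ pathCost c l := by
  induction hL using IsPath.induction_on generalizing l with
  | singleton => exact Nat.zero_le _
  | cons i b L _ _ hL ih =>
    obtain ⟨hbl, hLl⟩ : b ∈ l ∧ L ⊆ l := List.cons_subset.1 (List.cons_subset.1 hsub).2
    obtain ⟨u, w, rfl⟩ := List.append_of_mem hbl
    obtain ⟨hu, hw⟩ := isPath_append_cons.1 hl
    have hLw : b :: L ⊆ b :: w := fun v hv =>
      hl.mem_cons_of_le (List.cons_subset.2 ⟨hbl, hLl⟩ hv) (hL.left_le hv)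
    calc pathCost (minCost p ε c) (i :: b :: L)
        = minCost p ε c i b + pathCost (minCost p ε c) (b :: L) := pathCost_cons_cons ..
      _ ≤ pathCost c (u ++ [b]) + pathCost c (b :: w) := add_le_add (hu.minCost_le c) (ih hw hLw)
      _ = pathCost c (u ++ b :: w) := (pathCost_append_cons ..).symm

theorem IsPath.exists_pathCost_eq_pathCost_minCost (hL : IsPath p δ i j L) (hε : 0 ≤ ε)
    (c : Fin n → Fin n → ℕ) :
    ∃ l, IsPath p ε i j l ∧ L ⊆ l ∧ pathCost c l = pathCost (minCost p ε c) L := by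
  induction hL using IsPath.induction_on with
  | singleton => exact ⟨[j], isPath_singleton.2 ⟨rfl, rfl⟩, List.Subset.refl _, rfl⟩
  | cons i b L hib _ _ ih =>
    obtain ⟨l, hl, hsub, hcost⟩ := ih
    obtain ⟨l', hl', hcost'⟩ := exists_pathCost_eq_minCost p hε c hib.le
    obtain ⟨w, rfl⟩ := hl.exists_eq_cons
    obtain ⟨u, rfl⟩ := hl'.exists_eq_concat
    have hglued : IsPath p ε i j (u ++ b :: w) := isPath_append_cons.2 ⟨hl', hl⟩
    refine ⟨u ++ b :: w, hglued, List.cons_subset.2 ⟨hglued.left_mem, ?_⟩, ?_⟩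
    · exact List.subset_append_of_subset_right u hsub
    · rw [pathCost_append_cons, pathCost_cons_cons, hcost', hcost]

end PathCost

section ProgressiveSimplification

variable {n m : ℕ} {p : Fin n → Pt} {ε : ℕ → ℝ} {c : ℕ → Fin n → Fin n → ℕ} {i j : Fin n}
  {S : ℕ → List (Fin n)} {L : List (Fin n)}

theorem progSimp_one : ProgSimp p 1 ε i j S ↔ IsPath p (ε 1) i j (S 1) := by
  refine ⟨fun h => h.1 1 le_rfl le_rfl, fun h => ⟨fun k hk hk1 => ?_, fun k hk hk1 => ?_⟩⟩
  · rwa [le_antisymm hk1 hk]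
  · omega

theorem progSimp_succ (hm : 1 ≤ m) : ProgSimp p (m + 1) ε i j S ↔
    ProgSimp p m ε i j S ∧ IsPath p (ε (m + 1)) i j (S (m + 1)) ∧ S (m + 1) ⊆ S m := by
  constructor
  · intro h
    exact ⟨⟨fun k hk hkm => h.1 k hk (by omega), fun k hk hkm => h.2 k hk (by omega)⟩,
      h.1 (m + 1) (by omega) le_rfl, h.2 m hm (by omega)⟩
  · rintro ⟨h, htop, hsub⟩
    refine ⟨fun k hk hkm => ?_, fun k hk hkm => ?_⟩
    · rcases Nat.le_succ_iff.1 hkm with hkm | rfl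
      exacts [h.1 k hk hkm, htop]
    · rcases Nat.lt_succ_iff_lt_or_eq.1 hkm with hkm | rfl
      exacts [h.2 k hk hkm, hsub]

theorem ProgSimp.congr {T : ℕ → List (Fin n)} (h : ProgSimp p m ε i j S)
    (hST : ∀ k, 1 ≤ k → k ≤ m → S k = T k) : ProgSimp p m ε i j T := by
  refine ⟨fun k hk hkm => ?_, fun k hk hkm => ?_⟩
  · rw [← hST k hk hkm]
    exact h.1 k hk hkm
  · rw [← hST k hk hkm.le, ← hST (k + 1) (by omega) hkm]
    exact h.2 k hk hkm

theorem ProgSimp.update (hm : 1 ≤ m) (h : ProgSimp p m ε i j S)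
    (hL : IsPath p (ε (m + 1)) i j L) (hsub : L ⊆ S m) :
    ProgSimp p (m + 1) ε i j (Function.update S (m + 1) L) := by
  have hlow : ∀ k, 1 ≤ k → k ≤ m → S k = Function.update S (m + 1) L k := fun k _ hk =>
    (Function.update_of_ne (by omega) _ _).symm
  rw [progSimp_succ hm, Function.update_self, ← hlow m hm le_rfl]
  exact ⟨h.congr hlow, hL, hsub⟩

theorem sum_Icc_update_succ {α β : Type*} [AddCommMonoid β] (f : α → β) (S : ℕ → α) (x : α)
    {a b : ℕ} (hab : a ≤ b + 1) : ∑ k ∈ Finset.Icc a (b + 1), f (Function.update S (b + 1) x k) =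
      ∑ k ∈ Finset.Icc a b, f (S k) + f x := by
  have hlow : ∀ k ∈ Finset.Icc a b, f (Function.update S (b + 1) x k) = f (S k) := fun k hk => by
    rw [Function.update_of_ne (Nat.lt_succ_of_le (Finset.mem_Icc.1 hk).2).ne]
  rw [Finset.sum_Icc_succ_top hab, Function.update_self, Finset.sum_congr rfl hlow]

theorem ProgSimp.sum_length (h : ProgSimp p m ε i j S) :
    ∑ k ∈ Finset.Icc 1 m, (S k).length = m + ∑ k ∈ Finset.Icc 1 m, ((S k).length - 1) := by
  have length_eq : ∀ k ∈ Finset.Icc 1 m, (S k).length = 1 + ((S k).length - 1) := fun k hk => by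
    obtain ⟨hk, hkm⟩ := Finset.mem_Icc.1 hk
    have := List.length_pos_of_mem (h.1 k hk hkm).left_mem
    omega
  rw [Finset.sum_congr rfl length_eq, Finset.sum_add_distrib]
  simp

/-- `c 1, …, c m` are the cost values of the dynamic program for the tolerances `ε 1, …, ε m`.
They are prescribed only on valid shortcuts, and the recursion is written from level `k` to
level `k + 1` to avoid subtraction. -/
structure IsCostSeq (p : Fin n → Pt) (m : ℕ) (ε : ℕ → ℝ) (c : ℕ → Fin n → Fin n → ℕ) :
    Prop where
  one : ∀ i j, i < j → err p i j ≤ ε 1 → c 1 i j = 1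
  succ : ∀ k, 1 ≤ k → k < m → ∀ i j, i < j → err p i j ≤ ε (k + 1) →
    c (k + 1) i j = 1 + minCost p (ε k) (c k) i j

namespace IsCostSeq

theorem of_succ (hc : IsCostSeq p (m + 1) ε c) : IsCostSeq p m ε c :=
  ⟨hc.one, fun k hk hkm => hc.succ k hk (by omega)⟩

theorem pathCost_level_one (hc : IsCostSeq p m ε c) (hL : IsPath p (ε 1) i j L) :
    pathCost (c 1) L = L.length - 1 :=
  (hL.pathCost_congr hc.one).trans (pathCost_one L)

theorem pathCost_level_succ (hc : IsCostSeq p (m + 1) ε c) (hm : 1 ≤ m)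
    (hL : IsPath p (ε (m + 1)) i j L) :
    pathCost (c (m + 1)) L = pathCost (minCost p (ε m) (c m)) L + (L.length - 1) := by
  have hcongr : pathCost (c (m + 1)) L = pathCost (1 + minCost p (ε m) (c m)) L :=
    hL.pathCost_congr (hc.succ m hm m.lt_succ_self)
  rw [hcongr, pathCost_add, pathCost_one, add_comm]

theorem pathCost_le_sum (hc : IsCostSeq p m ε c) (hm : 1 ≤ m) (hS : ProgSimp p m ε i j S) :
    pathCost (c m) (S m) ≤ ∑ k ∈ Finset.Icc 1 m, ((S k).length - 1) := by
  induction m, hm using Nat.le_induction with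
  | base => simp [hc.pathCost_level_one (progSimp_one.1 hS)]
  | succ m hm ih =>
    obtain ⟨hS, htop, hsub⟩ := (progSimp_succ hm).1 hS
    calc pathCost (c (m + 1)) (S (m + 1))
        = pathCost (minCost p (ε m) (c m)) (S (m + 1)) + ((S (m + 1)).length - 1) :=
          hc.pathCost_level_succ hm htop
      _ ≤ pathCost (c m) (S m) + ((S (m + 1)).length - 1) := by
          gcongr
          exact htop.pathCost_minCost_le (hS.1 m hm le_rfl) hsub (c m)
      _ ≤ ∑ k ∈ Finset.Icc 1 m, ((S k).length - 1) + ((S (m + 1)).length - 1) := by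
          gcongr
          exact ih hc.of_succ hS
      _ = ∑ k ∈ Finset.Icc 1 (m + 1), ((S k).length - 1) :=
          (Finset.sum_Icc_succ_top (by omega) _).symm

theorem exists_progSimp_sum_eq (hc : IsCostSeq p m ε c) (hm : 1 ≤ m)
    (hε : ∀ k, 1 ≤ k → k < m → 0 ≤ ε k) (hL : IsPath p (ε m) i j L) :
    ∃ S, ProgSimp p m ε i j S ∧ S m = L ∧
      ∑ k ∈ Finset.Icc 1 m, ((S k).length - 1) = pathCost (c m) L := by
  induction m, hm using Nat.le_induction generalizing L with
  | base => exact ⟨fun _ => L, progSimp_one.2 hL, rfl, by simp [hc.pathCost_level_one hL]⟩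
  | succ m hm ih =>
    obtain ⟨l, hl, hsub, hcost⟩ :=
      hL.exists_pathCost_eq_pathCost_minCost (hε m hm m.lt_succ_self) (c m)
    obtain ⟨S, hS, rfl, hsum⟩ := ih hc.of_succ (fun k hk hkm => hε k hk (by omega)) hl
    refine ⟨_, hS.update hm hL hsub, Function.update_self .., ?_⟩
    calc ∑ k ∈ Finset.Icc 1 (m + 1), ((Function.update S (m + 1) L k).length - 1)
        = ∑ k ∈ Finset.Icc 1 m, ((S k).length - 1) + (L.length - 1) :=
          sum_Icc_update_succ (fun l => l.length - 1) S L (by omega)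
      _ = pathCost (minCost p (ε m) (c m)) L + (L.length - 1) := by rw [hsum, hcost]
      _ = pathCost (c (m + 1)) L := (hc.pathCost_level_succ hm hL).symm

theorem isLeast_minCost (hc : IsCostSeq p m ε c) (hm : 1 ≤ m)
    (hε : ∀ k, 1 ≤ k → k ≤ m → 0 ≤ ε k) (hij : i ≤ j) :
    IsLeast {s | ∃ S, ProgSimp p m ε i j S ∧ ∑ k ∈ Finset.Icc 1 m, ((S k).length - 1) = s}
      (minCost p (ε m) (c m) i j) := by
  constructor
  · obtain ⟨L, hL, hcost⟩ := exists_pathCost_eq_minCost p (hε m hm le_rfl) (c m) hij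
    obtain ⟨S, hS, -, hsum⟩ := hc.exists_progSimp_sum_eq hm (fun k hk hkm => hε k hk hkm.le) hL
    exact ⟨S, hS, hsum.trans hcost⟩
  · rintro _ ⟨S, hS, rfl⟩
    exact ((hS.1 m hm le_rfl).minCost_le (c m)).trans (hc.pathCost_le_sum hm hS)

theorem isLeast_add_minCost (hc : IsCostSeq p m ε c) (hm : 1 ≤ m)
    (hε : ∀ k, 1 ≤ k → k ≤ m → 0 ≤ ε k) (hij : i ≤ j) :
    IsLeast {s | ∃ S, ProgSimp p m ε i j S ∧ ∑ k ∈ Finset.Icc 1 m, (S k).length = s}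
      (m + minCost p (ε m) (c m) i j) := by
  obtain ⟨⟨S, hS, hsum⟩, hle⟩ := hc.isLeast_minCost hm hε hij
  refine ⟨⟨S, hS, by rw [hS.sum_length, hsum]⟩, ?_⟩
  rintro _ ⟨T, hT, rfl⟩
  rw [hT.sum_length]
  exact Nat.add_le_add_left (hle ⟨T, hT, rfl⟩) m

end IsCostSeq

theorem min_cost_eq_min_progressive_general (hm : 1 ≤ m)
    (hε : ∀ k, 1 ≤ k → k ≤ m → 0 ≤ ε k) (hc : IsCostSeq p m ε c) (hij : i ≤ j) :
    minCost p (ε m) (c m) i j =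
      sInf {s | ∃ S, ProgSimp p m ε i j S ∧ ∑ k ∈ Finset.Icc 1 m, ((S k).length - 1) = s} ∧
    sInf {s | ∃ S, ProgSimp p m ε i j S ∧ ∑ k ∈ Finset.Icc 1 m, (S k).length = s} =
      m + minCost p (ε m) (c m) i j :=
  ⟨(hc.isLeast_minCost hm hε hij).csInf_eq.symm, (hc.isLeast_add_minCost hm hε hij).csInf_eq⟩

end ProgressiveSimplification

/-- The minimum `c m`-cost of an `ε m`-simplification equals the minimum
of `Σ_{k=1}^m (|S k| - 1)` over all progressive simplifications, and the minimum
cumulative size `Σ_{k=1}^m |S k|` equals `m` plus the former minimum. -/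
theorem min_cost_eq_min_progressive {n m : ℕ} (hn : 2 ≤ n) (hm : 1 ≤ m) (p : Fin n → Pt)
    (ε : ℕ → ℝ) (hε1 : 0 < ε 1)
    (hεmono : ∀ k, 1 ≤ k → k < m → ε k < ε (k + 1))
    (c : ℕ → Fin n → Fin n → ℕ)
    (hc1 : ∀ i j : Fin n, i < j → err p i j ≤ ε 1 → c 1 i j = 1)
    (hck : ∀ k, 2 ≤ k → k ≤ m → ∀ i j : Fin n, i < j → err p i j ≤ ε k →
      c k i j = 1 + minCost p (ε (k - 1)) (c (k - 1)) i j) :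
    minCost p (ε m) (c m) (⟨0, by omega⟩ : Fin n) (⟨n - 1, by omega⟩ : Fin n) =
      sInf {s : ℕ | ∃ S : ℕ → List (Fin n),
        ProgSimp p m ε (⟨0, by omega⟩ : Fin n) (⟨n - 1, by omega⟩ : Fin n) S ∧
        ∑ k ∈ Finset.Icc 1 m, ((S k).length - 1) = s} ∧
    sInf {s : ℕ | ∃ S : ℕ → List (Fin n),
        ProgSimp p m ε (⟨0, by omega⟩ : Fin n) (⟨n - 1, by omega⟩ : Fin n) S ∧
        ∑ k ∈ Finset.Icc 1 m, (S k).length = s} =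
      m + minCost p (ε m) (c m) (⟨0, by omega⟩ : Fin n) (⟨n - 1, by omega⟩ : Fin n) := by
  have hmono : StrictMonoOn ε (Set.Icc 1 m) :=
    strictMonoOn_of_lt_add_one Set.ordConnected_Icc fun k _ hk hk' => hεmono k hk.1 hk'.2
  exact min_cost_eq_min_progressive_general hm
    (fun k hk hkm => hε1.le.trans (hmono.monotoneOn ⟨le_rfl, hm⟩ ⟨hk, hkm⟩ hk))
    ⟨hc1, fun k hk hkm => hck (k + 1) (by omega) hkm⟩ (Nat.zero_le _)
end
end
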